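/- Fix α_p > 0, σ_μ ≥ 0, γ > 0, σ_ε > 0. There exists A > 0 such that for every α_x > A, setting α_z = α_x²/(γ²·σ_ε²), α = α_x + α_p + α_z and α_ψ = α²/(α_x + α_p²·σ_μ²), there exist Z ∈ ℝ, x_c ∈ ℝ and m ∈ ℝ such that the equation Φ(√α_ψ·(((α_z + α_p)/α)·θ − (α_z/α)·Z − (α_p/α)·m − x_c/√α)) = θ has at least three distinct solutions θ in (0,1). -/

import Mathlib

/-- The standard normal cumulative distribution function. -/
noncomputable def stdNormalCDF (x : ℝ) : ℝ :=
  ∫ t in Set.Iic x, (Real.sqrt (2 * Real.pi))⁻¹ * Real.exp (-t ^ 2 / 2)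

/-!
The equilibrium condition reads `Φ (K * (θ - c)) = θ` with slope
`K = (αz + αp) / √(αx + αp² σμ²)`, and the public signal `Z` moves the centre `c` freely. Take
`c = Φ 0`, so that `θ = c` is a solution. For fixed `θ < c` the left side tends to `0` as `K → ∞`,
and for fixed `θ > c` it tends to `1`, so once `K` is large the intermediate value theorem yields
one more solution on each side of `c`. Since `αz` grows like `αx²`, the slope `K` grows like
`αx ^ (3 / 2)`, hence is eventually large.
-/

open MeasureTheory ProbabilityTheory Filter Topology Set Function

theorem continuous_cdf (μ : Measure ℝ) [IsProbabilityMeasure μ] [NullSingletonClass μ] :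
    Continuous (cdf μ) := by
  refine continuous_iff_continuousAt.2 fun x ↦ ?_
  have no_jump : cdf μ x - leftLim (cdf μ) x ≤ 0 := by
    rw [← ENNReal.ofReal_eq_zero, ← StieltjesFunction.measure_singleton, measure_cdf,
      measure_singleton]
  rw [(monotone_cdf μ).continuousAt_iff_leftLim_eq_rightLim, (cdf μ).rightLim_eq]
  exact ((monotone_cdf μ).leftLim_le le_rfl).antisymm (sub_nonpos.1 no_jump)

theorem cdf_mem_Ioo (μ : Measure ℝ) [IsProbabilityMeasure μ] [μ.IsOpenPosMeasure] (x : ℝ) :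
    cdf μ x ∈ Ioo 0 1 := by
  have Iic_pos : 0 < μ (Iic x) := μ.measure_pos_of_nonempty_interior (by simp)
  have Iic_ne_one : μ (Iic x) ≠ 1 :=
    mt isClosed_Iic.measure_eq_one_iff_eq_univ.1 <|
      (ne_univ_iff_exists_notMem _).2 ⟨x + 1, (lt_add_one x).not_ge⟩
  rw [← ofReal_cdf] at Iic_pos Iic_ne_one
  exact ⟨ENNReal.ofReal_pos.1 Iic_pos,
    (cdf_le_one μ x).lt_of_ne fun h ↦ Iic_ne_one (by rw [h, ENNReal.ofReal_one])⟩

theorem stdNormalCDF_eq_cdf : stdNormalCDF = cdf (gaussianReal 0 1) := by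
  funext x
  rw [cdf_eq_real, Measure.real, gaussianReal_apply_eq_integral 0 one_ne_zero,
    ENNReal.toReal_ofReal (integral_nonneg (gaussianPDFReal_nonneg 0 1))]
  simp [stdNormalCDF, gaussianPDFReal]

theorem continuous_stdNormalCDF : Continuous stdNormalCDF := by
  have := nullSingletonClass_gaussianReal (μ := 0) one_ne_zero
  exact stdNormalCDF_eq_cdf ▸ continuous_cdf _

theorem stdNormalCDF_mem_Ioo (x : ℝ) : stdNormalCDF x ∈ Ioo 0 1 := by
  have := (gaussianReal_absolutelyContinuous' 0 one_ne_zero).isOpenPosMeasure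
  exact stdNormalCDF_eq_cdf ▸ cdf_mem_Ioo _ x

theorem tendsto_stdNormalCDF_atBot : Tendsto stdNormalCDF atBot (𝓝 0) :=
  stdNormalCDF_eq_cdf ▸ tendsto_cdf_atBot _

theorem tendsto_stdNormalCDF_atTop : Tendsto stdNormalCDF atTop (𝓝 1) :=
  stdNormalCDF_eq_cdf ▸ tendsto_cdf_atTop _

theorem eventually_exists_three_isFixedPt_comp_mul_sub {F : ℝ → ℝ} {a b : ℝ}
    (hF : Continuous F) (h_bot : Tendsto F atBot (𝓝 a)) (h_top : Tendsto F atTop (𝓝 b))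
    (h_mem : ∀ x, F x ∈ Ioo a b) :
    ∀ᶠ K in atTop, ∃ θ₁ θ₂ θ₃ : ℝ, θ₁ < θ₂ ∧ θ₂ < θ₃ ∧
      IsFixedPt (fun θ ↦ F (K * (θ - F 0))) θ₁ ∧ IsFixedPt (fun θ ↦ F (K * (θ - F 0))) θ₂ ∧
      IsFixedPt (fun θ ↦ F (K * (θ - F 0))) θ₃ := by
  obtain ⟨u, hau, huc⟩ := exists_between (h_mem 0).1
  obtain ⟨v, hcv, hvb⟩ := exists_between (h_mem 0).2
  have below : ∀ᶠ K in atTop, F (K * (u - F 0)) < u :=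
    (h_bot.comp (tendsto_id.atTop_mul_const_of_neg (sub_neg.2 huc))).eventually_lt_const hau
  have above : ∀ᶠ K in atTop, v < F (K * (v - F 0)) :=
    (h_top.comp (tendsto_id.atTop_mul_const (sub_pos.2 hcv))).eventually_const_lt hvb
  filter_upwards [below, above] with K hu hv
  have cont : Continuous fun θ ↦ F (K * (θ - F 0)) := by fun_prop
  obtain ⟨θ₁, hθ₁, fix₁⟩ := exists_mem_Icc_isFixedPt cont.continuousOn hau.le (h_mem _).1.le hu.le
  obtain ⟨θ₃, hθ₃, fix₃⟩ := exists_mem_Icc_isFixedPt cont.continuousOn hvb.le hv.le (h_mem _).2.le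
  exact ⟨θ₁, F 0, θ₃, hθ₁.2.trans_lt huc, hcv.trans_le hθ₃.1, fix₁, by simp [IsFixedPt], fix₃⟩

theorem tendsto_sq_div_sqrt_add_atTop (s : ℝ) :
    Tendsto (fun x : ℝ ↦ x ^ 2 / √(x + s)) atTop atTop := by
  refine tendsto_atTop_mono' _ ?_ tendsto_id
  filter_upwards [eventually_ge_atTop 2, eventually_ge_atTop s, eventually_gt_atTop (-s)]
    with x h2 hs hs'
  have sqrt_pos : 0 < √(x + s) := Real.sqrt_pos.2 (by linarith)
  have sqrt_le : √(x + s) ≤ x := Real.sqrt_le_iff.2 ⟨by linarith, by nlinarith⟩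
  rw [id, le_div_iff₀ sqrt_pos, sq]
  gcongr

theorem tendsto_sq_div_add_div_sqrt_add_atTop {g : ℝ} (hg : 0 < g) (p s : ℝ) :
    Tendsto (fun x : ℝ ↦ (x ^ 2 / g + p) / √(x + s)) atTop atTop := by
  have sqrt_atTop : Tendsto (fun x : ℝ ↦ √(x + s)) atTop atTop :=
    Real.tendsto_sqrt_atTop.comp (tendsto_atTop_add_const_right _ s tendsto_id)
  refine (((tendsto_sq_div_sqrt_add_atTop s).atTop_div_const hg).atTop_add
    (sqrt_atTop.const_div_atTop p)).congr fun x ↦ ?_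
  ring

theorem exists_publicSignal_argument_eq {αz α : ℝ} (hαz : αz ≠ 0) (hα : 0 < α)
    (αp v xc m c : ℝ) :
    ∃ Z : ℝ, ∀ θ : ℝ,
      √(α ^ 2 / v) * (((αz + αp) / α) * θ - (αz / α) * Z - (αp / α) * m - xc / √α) =
        (αz + αp) / √v * (θ - c) := by
  refine ⟨((αz + αp) * c - αp * m - α * (xc / √α)) / αz, fun θ ↦ ?_⟩
  rw [Real.sqrt_div (sq_nonneg α), Real.sqrt_sq hα.le]
  field_simp
  ring

theorem stmt_9_general (αp σμ γ σε : ℝ) (hαp : 0 ≤ αp) (hγ : 0 < γ)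
    (hσε : 0 < σε) :
    ∃ A > (0 : ℝ), ∀ αx > A,
      ∀ αz α αψ : ℝ, αz = αx ^ 2 / (γ ^ 2 * σε ^ 2) → α = αx + αp + αz →
        αψ = α ^ 2 / (αx + αp ^ 2 * σμ ^ 2) →
        ∀ xc m : ℝ, ∃ Z θ₁ θ₂ θ₃ : ℝ,
          θ₁ ∈ Ioo (0 : ℝ) 1 ∧ θ₂ ∈ Ioo (0 : ℝ) 1 ∧ θ₃ ∈ Ioo (0 : ℝ) 1 ∧
          θ₁ ≠ θ₂ ∧ θ₁ ≠ θ₃ ∧ θ₂ ≠ θ₃ ∧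
          stdNormalCDF (√αψ *
            (((αz + αp) / α) * θ₁ - (αz / α) * Z - (αp / α) * m - xc / √α)) = θ₁ ∧
          stdNormalCDF (√αψ *
            (((αz + αp) / α) * θ₂ - (αz / α) * Z - (αp / α) * m - xc / √α)) = θ₂ ∧
          stdNormalCDF (√αψ *
            (((αz + αp) / α) * θ₃ - (αz / α) * Z - (αp / α) * m - xc / √α)) = θ₃ := by
  have hg : 0 < γ ^ 2 * σε ^ 2 := by positivity
  obtain ⟨A, hA, three⟩ := (atTop_basis_Ioi' (0 : ℝ)).eventually_iff.1 <|
    (tendsto_sq_div_add_div_sqrt_add_atTop hg αp (αp ^ 2 * σμ ^ 2)).eventually <|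
      eventually_exists_three_isFixedPt_comp_mul_sub continuous_stdNormalCDF
        tendsto_stdNormalCDF_atBot tendsto_stdNormalCDF_atTop stdNormalCDF_mem_Ioo
  refine ⟨A, hA, ?_⟩
  rintro αx hαx αz α αψ hαz hα rfl xc m
  have hαx_pos : 0 < αx := hA.trans hαx
  have hαz_pos : 0 < αz := hαz ▸ by positivity
  have hα_pos : 0 < α := hα ▸ by positivity
  obtain ⟨Z, argument_eq⟩ := exists_publicSignal_argument_eq hαz_pos.ne' hα_pos αp
    (αx + αp ^ 2 * σμ ^ 2) xc m (stdNormalCDF 0)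
  obtain ⟨θ₁, θ₂, θ₃, h₁₂, h₂₃, fix₁, fix₂, fix₃⟩ := three hαx
  have mem_Ioo {K θ : ℝ} (h : IsFixedPt (fun θ ↦ stdNormalCDF (K * (θ - stdNormalCDF 0))) θ) :
      θ ∈ Ioo 0 1 := h ▸ stdNormalCDF_mem_Ioo _
  refine ⟨Z, θ₁, θ₂, θ₃, mem_Ioo fix₁, mem_Ioo fix₂, mem_Ioo fix₃,
    h₁₂.ne, (h₁₂.trans h₂₃).ne, h₂₃.ne, ?_⟩
  rw [← hαz] at fix₁ fix₂ fix₃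
  simp only [argument_eq]
  exact ⟨fix₁, fix₂, fix₃⟩

theorem stmt_9 (αp σμ γ σε : ℝ) (hαp : 0 < αp) (hσμ : 0 ≤ σμ) (hγ : 0 < γ)
    (hσε : 0 < σε) :
    ∃ A > (0 : ℝ), ∀ αx > A,
      ∀ αz α αψ : ℝ, αz = αx ^ 2 / (γ ^ 2 * σε ^ 2) → α = αx + αp + αz →
        αψ = α ^ 2 / (αx + αp ^ 2 * σμ ^ 2) →
        ∃ Z xc m : ℝ, ∃ θ₁ θ₂ θ₃ : ℝ,
          θ₁ ∈ Set.Ioo (0 : ℝ) 1 ∧ θ₂ ∈ Set.Ioo (0 : ℝ) 1 ∧ θ₃ ∈ Set.Ioo (0 : ℝ) 1 ∧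
          θ₁ ≠ θ₂ ∧ θ₁ ≠ θ₃ ∧ θ₂ ≠ θ₃ ∧
          stdNormalCDF (Real.sqrt αψ *
            (((αz + αp) / α) * θ₁ - (αz / α) * Z - (αp / α) * m - xc / Real.sqrt α)) = θ₁ ∧
          stdNormalCDF (Real.sqrt αψ *
            (((αz + αp) / α) * θ₂ - (αz / α) * Z - (αp / α) * m - xc / Real.sqrt α)) = θ₂ ∧
          stdNormalCDF (Real.sqrt αψ *
            (((αz + αp) / α) * θ₃ - (αz / α) * Z - (αp / α) * m - xc / Real.sqrt α)) = θ₃ := by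
  obtain ⟨A, hA, multiple⟩ := stmt_9_general αp σμ γ σε hαp.le hγ hσε
  exact ⟨A, hA, fun αx hαx αz α αψ hαz hα hαψ ↦
    let ⟨Z, θs⟩ := multiple αx hαx αz α αψ hαz hα hαψ 0 0; ⟨Z, 0, 0, θs⟩⟩
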